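/- arXiv:1104.0500 — 2 statements merged into one kernel-verified Lean document; each statement's English description precedes it below -/
import Mathlib

section
/- Let A be a finite-dimensional self-injective k-algebra such that every finitely generated non-projective A-module M has Ext_A^n(M,M) ≠ 0 for infinitely many integers n. Then every object X in D^b(mod-A) with Hom_{D(A)}(X, X[n]) = 0 for all but finitely many n belongs to K^b(P_A), i.e. is quasi-isomorphic to a bounded complex of finitely generated projective A-modules. -/
/-!
The idea is to replace `X` by a single module up to a perfect error term. Replacing terms of `X`
one at a time, from the top degree down, by finitely generated projective modules mapping onto
them (`exists_replace_one`, `exists_replace`) yields an isomorphic object `Y` in the same degrees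
`[a, b]`, with finitely generated terms which are projective in degrees `> a`. Let `M = Yᵃ`. The
kernel `F` of `Y ⟶ M[-a]` is a bounded complex of finitely generated projective modules, which are
also injective since `A` is self-injective; hence maps in the derived category out of and into
`F` are given by chain maps. For large `n`, supports force `Hom(Y, F[n + 1]) = 0` and
`Hom(F[1], M[n - a]) = 0`, so vanishing of `Hom(Y, Y[n])` yields `Ext n M M = 0`
(`hom_top_quotient_eq_zero`, `exists_ext_vanishing`). By condition (#), `M` is projective, and
`Y` itself is the required complex.

The terms of `X` may live in a larger universe than that of `A`, whereas self-injectivity and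
condition (#) concern modules in universe `0`; `projective_of_ext` and
`injective_of_fg_projective` bridge the gap.
-/

open CategoryTheory Limits DerivedCategory Opposite

noncomputable section

universe w v u

/-! ### Transfer of `Ext` and injectivity between universes -/

/-- In positive degrees, vanishing of `Abelian.Ext` forces vanishing of the `Ext` defined by left
deriving `Hom(-, Y)`: both are computed from one projective resolution of `X`, and a cocycle
representing the zero class is a coboundary. -/
lemma not_nontrivial_derivedExt {k : Type*} [Ring k] {C : Type u} [Category.{v} C] [Abelian C]
    [Linear k C] [EnoughProjectives C] [HasExt.{w} C] {X Y : C} {n : ℕ} (hn : 0 < n)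
    (h : Subsingleton (Abelian.Ext X Y n)) :
    ¬ Nontrivial (((Ext k C n).obj (op X)).obj Y) := by
  obtain ⟨p, rfl⟩ : ∃ p, n = p + 1 := ⟨n - 1, by omega⟩
  let R : ProjectiveResolution X := ProjectiveResolution.of X
  rw [not_nontrivial_iff_subsingleton, ← ModuleCat.isZero_iff_subsingleton]
  refine IsZero.of_iso ?_ (R.isoExt (p + 1) Y)
  rw [← HomologicalComplex.exactAt_iff_isZero_homology,
    HomologicalComplex.exactAt_iff' _ p (p + 1) (p + 2) (by simp) (by simp),
    ShortComplex.moduleCat_exact_iff]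
  intro f hf
  obtain ⟨g, hg⟩ := (R.extMk_eq_zero_iff (f : R.complex.X (p + 1) ⟶ Y) (p + 2) rfl hf p rfl).1
    (Subsingleton.elim _ _)
  exact ⟨g, hg⟩

/-- Vanishing of `Ext` can be checked after enlarging the universe, since `uliftFunctor` is exact,
fully faithful and preserves projectives. -/
lemma ulift_ext {A : Type} [Ring A] {M N : ModuleCat.{0} A} {n : ℕ}
   (h : Subsingleton (Abelian.Ext ((ModuleCat.uliftFunctor.{u} A).obj M)
      ((ModuleCat.uliftFunctor.{u} A).obj N) n)) :
   Subsingleton (Abelian.Ext M N n) :=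
  ((ModuleCat.uliftFunctor.{u} A).mapExt_bijective_of_preservesProjectiveObjects M N n).1.subsingleton

/-- Over a self-injective ring, a finitely generated projective module is a retract of some `Aⁿ`,
hence injective; the module may live in any universe. -/
lemma injective_of_fg_projective {A : Type} [Ring A] (h : Injective (ModuleCat.of A A))
    (P : ModuleCat.{u} A) [Module.Finite A P] [hP : Projective P] : Injective P := by
  have h0 : Injective (ModuleCat.of A (ULift.{u} A)) :=
    inferInstanceAs (Injective ((ModuleCat.uliftFunctor.{u} A).obj (ModuleCat.of A A)))
  obtain ⟨n, f, hf⟩ := Module.Finite.exists_fin' A P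
  have : Module.Projective A P := (IsProjective.iff_projective P).2 hP
  obtain ⟨s, hs⟩ := f.exists_rightInverse_of_surjective (LinearMap.range_eq_top.2 hf)
  have h1 : Module.Injective A (ULift.{u} A) := by
    exact Module.injective_module_of_injective_object _ _
  have h2 : Module.Injective A (Fin n → ULift.{u} A) := inferInstance
  have h3 := Module.injective_object_of_injective_module A (Fin n → ULift.{u} A)
  let e : (Fin n → ULift.{u} A) ≃ₗ[A] (Fin n → A) := LinearEquiv.piCongrRight fun _ => ULift.moduleEquiv
  let r : Retract P (ModuleCat.of A (Fin n → ULift.{u} A)) :=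
   { i := ModuleCat.ofHom (e.symm.toLinearMap ∘ₗ s)
     r := ModuleCat.ofHom (f ∘ₗ e.toLinearMap)
     retract := by
      ext x
      simpa using LinearMap.congr_fun hs x }
  exact r.injective

/-- A finitely generated module is a quotient of `Aⁿ`, so it has a copy in universe `0`. -/
lemma exists_small {A : Type} [Ring A] (M : ModuleCat.{u} A) [Module.Finite A M] :
  ∃ M0 : ModuleCat.{0} A, Module.Finite A M0 ∧ Nonempty ((ModuleCat.uliftFunctor.{u} A).obj M0 ≅ M) := by
  obtain ⟨n, f, hf⟩ := Module.Finite.exists_fin' A M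
  refine ⟨ModuleCat.of A ((Fin n → A) ⧸ LinearMap.ker f), inferInstanceAs (Module.Finite A ((Fin n → A) ⧸ LinearMap.ker f)), ⟨?_⟩⟩
  exact (ULift.moduleEquiv.trans (f.quotKerEquivOfSurjective hf)).toModuleIso

lemma subsingleton_ext_of_iso {C : Type u} [Category.{v} C] [Abelian C] [HasExt.{w} C] {X Y : C}
    (e : X ≅ Y) {n : ℕ} (h : Subsingleton (Abelian.Ext X X n)) :
    Subsingleton (Abelian.Ext Y Y n) := by
  refine subsingleton_of_forall_eq 0 fun x => ?_
  have h1 : (Abelian.Ext.mk₀ e.hom).comp (x.comp (Abelian.Ext.mk₀ e.inv) (add_zero n))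
      (zero_add n) = 0 := Subsingleton.elim _ _
  have h2 := congrArg (fun y => (Abelian.Ext.mk₀ e.inv).comp
    (y.comp (Abelian.Ext.mk₀ e.hom) (add_zero n)) (zero_add n)) h1
  simpa using h2

/-- Under condition (#), which concerns modules in universe `0`, a finitely generated module in any
universe with eventually vanishing self-extensions is projective. -/
lemma projective_of_ext {k A : Type} [Field k] [Ring A] [Algebra k A]
    (hsharp : ∀ M : ModuleCat A, Module.Finite A M → ¬ Projective M →
      {n : ℕ | Nontrivial (((Ext k (ModuleCat A) n).obj (op M)).obj M)}.Infinite)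
    (M : ModuleCat.{u} A) [Module.Finite A M] (N : ℕ)
    (h : ∀ n ≥ N, Subsingleton (Abelian.Ext M M n)) : Projective M := by
  obtain ⟨M0, h0, ⟨e⟩⟩ := exists_small M
  suffices Projective M0 by
    exact Projective.of_iso e inferInstance
  by_contra hM
  obtain ⟨n, hn, hlt⟩ := (hsharp M0 h0 hM).exists_gt N
  refine not_nontrivial_derivedExt (by omega : 0 < n) (ulift_ext.{u} ?_) hn
  exact subsingleton_ext_of_iso e.symm (h n hlt.le)

/-! ### Replacing one term of a complex -/

section
variable {C : Type u} [Category.{v} C] [HasZeroMorphisms C] [HasZeroObject C]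
  {K : CochainComplex C ℤ} {Z₀ Z₁ : C} (f : Z₀ ⟶ Z₁)

open HomologicalComplex

/-- Every morphism `φ : K.X j ⟶ Z` extends to a chain map from `K` to the contractible complex
`𝟙 : Z ⟶ Z` placed in degrees `i` and `j = i + 1`. -/
lemma exists_hom_to_double (i j : ℤ) (hij : (ComplexShape.up ℤ).Rel i j) {Z : C}
    (φ : K.X j ⟶ Z) :
    ∃ ψ : K ⟶ double (𝟙 Z) hij, ψ.f j = φ ≫ (doubleXIso₁ (𝟙 Z) hij (by rintro rfl; simp at hij)).inv := by
  have hne : i ≠ j := by rintro rfl; simp at hij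
  let g (k : ℤ) : K.X k ⟶ (double (𝟙 Z) hij).X k :=
    if h₀ : k = i then eqToHom (by rw [h₀]) ≫ K.d i j ≫ φ ≫ (doubleXIso₀ (𝟙 Z) hij).inv ≫
      eqToHom (by rw [h₀])
    else if h₁ : k = j then eqToHom (by rw [h₁]) ≫ φ ≫ (doubleXIso₁ (𝟙 Z) hij hne).inv ≫
      eqToHom (by rw [h₁])
    else 0
  have g₀ : g i = K.d i j ≫ φ ≫ (doubleXIso₀ (𝟙 Z) hij).inv := by simp [g]
  have g₁ : g j = φ ≫ (doubleXIso₁ (𝟙 Z) hij hne).inv := by simp [g, hne.symm]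
  refine ⟨{ f := g, comm' := fun k l hkl => ?_ }, g₁⟩
  by_cases hl₁ : l = j
  · obtain rfl : k = i := by simp at hkl hij; omega
    subst hl₁
    simp [g₀, g₁, double_d _ _ hne]
  · rw [double_d_eq_zero₁ _ _ _ _ hl₁, comp_zero]
    by_cases hl₀ : l = i
    · subst hl₀; simp [g₀]
    · exact (isZero_double_X _ _ _ hl₀ hl₁).eq_of_tgt _ _

end

section
variable {C : Type u} [Category.{v} C] [Abelian C]
open HomologicalComplex

lemma acyclic_double (i j : ℤ) (hij : (ComplexShape.up ℤ).Rel i j) (Z : C) :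
    (double (𝟙 Z) hij).Acyclic := by
  have hne : i ≠ j := by rintro rfl; simp at hij
  intro k
  rw [exactAt_iff' _ (k - 1) k (k + 1) (by simp) (by simp)]
  by_cases h₀ : k = i
  · subst h₀
    obtain rfl : k + 1 = j := by simpa using hij
    rw [ShortComplex.exact_iff_mono]
    · change Mono ((double (𝟙 Z) hij).d k (k + 1))
      rw [double_d _ _ hne]
      infer_instance
    · exact double_d_eq_zero₀ _ hij _ _ (by omega)
  · by_cases h₁ : k = j
    · subst h₁
      obtain rfl : k - 1 = i := by simp at hij; omega
      rw [ShortComplex.exact_iff_epi]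
      · change Epi ((double (𝟙 Z) hij).d (k - 1) k)
        rw [double_d _ _ hne]
        infer_instance
      · exact double_d_eq_zero₀ _ hij _ _ (by omega)
    · exact ShortComplex.exact_of_isZero_X₂ _ (isZero_double_X (𝟙 Z) hij _ h₀ h₁)

open ZeroObject in
lemma isZero_Q_of_acyclic [HasDerivedCategory.{w} C] {K : CochainComplex C ℤ} (hK : K.Acyclic) :
    IsZero (Q.obj K) := by
  have : QuasiIso (0 : K ⟶ (0 : CochainComplex C ℤ)) := ⟨fun i => by
    rw [quasiIsoAt_iff_exactAt _ _ (hK i)]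
    exact ExactAt.of_isZero ((eval C _ i).map_isZero (isZero_zero _))⟩
  exact IsZero.of_iso (Q.map_isZero (isZero_zero _)) (asIso (Q.map (0 : K ⟶ (0 : CochainComplex C ℤ))))

/-- Pulling `X` back along `(P ⟶ P) ⟶ (Xⁿ ⟶ Xⁿ)`, where both contractible complexes sit in degrees
`n - 1` and `n`, replaces `Xⁿ` by `P` without changing the object of the derived category, because
`0 ⟶ X' ⟶ X ⊞ (P ⟶ P) ⟶ (Xⁿ ⟶ Xⁿ) ⟶ 0` is exact. Only degrees `n - 1` and `n` are affected. -/
lemma exists_replace_one [HasDerivedCategory.{w} C] (X : CochainComplex C ℤ) (n : ℤ) {P : C}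
    (π : P ⟶ X.X n) [Epi π] :
    ∃ X' : CochainComplex C ℤ, Nonempty (Q.obj X' ≅ Q.obj X) ∧ Nonempty (X'.X n ≅ P) ∧
      (∀ i, i ≠ n → i ≠ n - 1 → Nonempty (X'.X i ≅ X.X i)) ∧
      ∃ m : X'.X (n - 1) ⟶ X.X (n - 1) ⊞ P, Mono m := by
  have hij : (ComplexShape.up ℤ).Rel (n - 1) n := by simp
  have hne : n - 1 ≠ n := by omega
  obtain ⟨f, hf⟩ := exists_hom_to_double (K := X) (n - 1) n hij (𝟙 (X.X n))
  let g : double (𝟙 P) hij ⟶ double (𝟙 (X.X n)) hij :=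
    mkHomFromDouble _ hne (π ≫ (doubleXIso₀ _ _).inv) (π ≫ (doubleXIso₁ _ _ hne).inv)
      (by simp [double_d _ _ hne]) (fun k hk => by
        rw [double_d_eq_zero₀ _ _ _ _ hne.symm, comp_zero])
  have hg (i : ℤ) : Epi (g.f i) := by
    by_cases h₀ : i = n - 1
    · subst h₀; simp only [g, mkHomFromDouble_f₀]; infer_instance
    · by_cases h₁ : i = n
      · subst h₁; simp only [g, mkHomFromDouble_f₁]; infer_instance
      · exact ⟨fun _ _ _ => (isZero_double_X _ _ _ h₀ h₁).eq_of_src _ _⟩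
  have : Epi g := epi_of_epi_f _ hg
  -- All remaining claims are read off from the pullback square, globally or degreewise.
  have sq := IsPullback.of_hasPullback f g
  have sqi (i : ℤ) := sq.map (eval C (ComplexShape.up ℤ) i)
  refine ⟨pullback f g, ?_, ?_, ?_, ?_⟩
  · have hS : sq.shortComplex'.ShortExact :=
      { exact := ShortComplex.exact_of_f_is_kernel _ sq.isLimitKernelFork
        mono_f := sq.mono_shortComplex'_f
        epi_g := by
          have : Epi (biprod.inr ≫ sq.shortComplex'.g) := by
            simp only [CommSq.shortComplex', biprod.inr_desc]; infer_instance
          exact epi_of_epi biprod.inr _ }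
    have h1 : IsIso (Q.map sq.shortComplex'.f) :=
      (Pretriangulated.Triangle.isZero₃_iff_isIso₁ _ (triangleOfSES_distinguished hS)).1
        (isZero_Q_of_acyclic (acyclic_double _ _ hij _))
    have h2 : IsIso (Q.map (biprod.fst : X ⊞ double (𝟙 P) hij ⟶ X)) := by
      have hz : IsZero (Q.obj (double (𝟙 P) hij)) :=  (isZero_Q_of_acyclic (acyclic_double _ _ hij _))
      refine ⟨Q.map biprod.inl, ?_, ?_⟩
      · have := congrArg Q.map (biprod.total (X := X) (Y := double (𝟙 P) hij))
        rw [Q.map_add, Q.map_comp, Q.map_comp, Q.map_id, hz.eq_of_tgt (Q.map biprod.snd) 0,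
          zero_comp, add_zero] at this
        exact this
      · rw [← Q.map_comp, biprod.inl_fst, Q.map_id]
    exact ⟨@asIso _ _ _ _ _ h1 ≪≫ @asIso _ _ _ _ _ h2⟩
  · have : IsIso ((eval C (ComplexShape.up ℤ) n).map f) := by
      change IsIso (f.f n)
      rw [hf]; infer_instance
    have : IsIso ((eval C (ComplexShape.up ℤ) n).map (pullback.snd f g)) := (sqi n).isIso_snd_of_isIso
    exact ⟨@asIso _ _ _ _ _ this ≪≫ doubleXIso₁ (𝟙 P) hij hne⟩
  · intro i h₁ h₀
    have : IsIso ((eval C (ComplexShape.up ℤ) i).map g) :=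
      isIso_of_source_target_iso_zero _
        (isZero_double_X (𝟙 P) hij _ h₀ h₁).isoZero
        (isZero_double_X (𝟙 (X.X n)) hij _ h₀ h₁).isoZero
    have := (sqi i).isIso_fst_of_isIso
    exact ⟨@asIso _ _ _ _ _ this⟩
  · have : Mono (sqi (n - 1)).shortComplex'.f := (sqi (n - 1)).mono_shortComplex'_f
    let e : (eval C (ComplexShape.up ℤ) (n - 1)).obj X ⊞
        (eval C (ComplexShape.up ℤ) (n - 1)).obj (double (𝟙 P) hij) ≅ X.X (n - 1) ⊞ P :=
      biprod.mapIso (Iso.refl (X.X (n - 1))) (doubleXIso₀ (𝟙 P) hij)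
    exact ⟨(sqi (n - 1)).shortComplex'.f ≫ e.hom, @mono_comp _ _ _ _ _ _ this e.hom (@IsIso.mono_of_iso _ _ _ _ e.hom e.isIso_hom)⟩

end

/-! ### Passing to the bottom term -/

section
variable {C : Type u} [Category.{v} C] [Abelian C] [HasDerivedCategory.{w} C]
open HomologicalComplex

lemma exists_chainMap {K L : CochainComplex C ℤ} (h : K.IsKProjective ∨ L.IsKInjective)
    (f : Q.obj K ⟶ Q.obj L) : ∃ g : K ⟶ L, f = Q.map g := by
  have hs : Function.Surjective (Qh.map : ((HomotopyCategory.quotient _ _).obj K ⟶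
      (HomotopyCategory.quotient C (ComplexShape.up ℤ)).obj L) → _) := by
    obtain h | h := h
    · exact (CochainComplex.IsKProjective.Qh_map_bijective K _).2
    · exact (CochainComplex.IsKInjective.Qh_map_bijective _ L).2
  obtain ⟨g, hg⟩ := hs ((quotientCompQhIso C).hom.app K ≫ f ≫ (quotientCompQhIso C).inv.app L)
  obtain ⟨g, rfl⟩ := (HomotopyCategory.quotient _ _).map_surjective g
  refine ⟨g, ?_⟩
  rw [← cancel_epi ((quotientCompQhIso C).hom.app K), ← quotientCompQhIso_hom_naturality, hg]
  simp

/-- If `K` is K-projective or `L` is K-injective, morphisms `K ⟶ L⟦n⟧` in the derived category come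
from chain maps, so they vanish when `K` and `L⟦n⟧` have disjoint supports. -/
lemma hom_shift_eq_zero {K L : CochainComplex C ℤ} (h : K.IsKProjective ∨ L.IsKInjective) (n : ℤ)
    (hKL : ∀ i, IsZero (K.X i) ∨ IsZero (L.X (i + n))) (f : Q.obj K ⟶ (Q.obj L)⟦n⟧) : f = 0 := by
  obtain ⟨g, hg⟩ := exists_chainMap (L := L⟦n⟧) (h.imp_right fun h : L.IsKInjective => (CochainComplex.isKInjective_shift_iff L n).2 h)
    (f ≫ (Q.commShiftIso n).inv.app L)
  have hg0 : g = 0 := by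
    ext i
    obtain h | h := hKL i
    · exact h.eq_of_src _ _
    · exact h.eq_of_tgt _ _
  rw [← cancel_mono ((Q.commShiftIso n).inv.app L), hg, hg0]
  simp

/-- Let `0 ⟶ F ⟶ Y ⟶ T ⟶ 0` be exact with `F` both K-projective and K-injective. When
`Hom(Y, F⟦n + 1⟧)` and `Hom(F⟦1⟧, T⟦n⟧)` vanish for reasons of support, vanishing of
`Hom(Y, Y⟦n⟧)` passes to `Hom(T, T⟦n⟧)`: the composite `Y ⟶ T ⟶ T⟦n⟧` lifts to `Y⟦n⟧`, so it is
zero, hence `T ⟶ T⟦n⟧` factors through `F⟦1⟧`. -/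
lemma hom_top_quotient_eq_zero {F Y T : CochainComplex C ℤ} {i : F ⟶ Y} {p : Y ⟶ T} (w : i ≫ p = 0)
    (hS : (ShortComplex.mk i p w).ShortExact) [F.IsKProjective] [F.IsKInjective] (n : ℤ)
    (h₁ : ∀ j, IsZero (Y.X j) ∨ IsZero (F.X (j + (n + 1))))
    (h₂ : ∀ j, IsZero (F.X (j + 1)) ∨ IsZero (T.X (j + n)))
    (hY : ∀ f : Q.obj Y ⟶ (Q.obj Y)⟦n⟧, f = 0) (f : Q.obj T ⟶ (Q.obj T)⟦n⟧) : f = 0 := by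
  have hT := triangleOfSES_distinguished hS
  have hTn := Pretriangulated.Triangle.shift_distinguished _ hT n
  have h0 : Q.map p ≫ f = 0 := by
    obtain ⟨u, hu⟩ := Pretriangulated.Triangle.coyoneda_exact₃ _ hTn (Q.map p ≫ f) (by
      have (v : Q.obj Y ⟶ ((Q.obj F)⟦n⟧)⟦(1 : ℤ)⟧) : v = 0 := by
        rw [← cancel_mono ((shiftFunctorAdd' _ n 1 (n + 1) rfl).inv.app (Q.obj F)), zero_comp]
        exact hom_shift_eq_zero (Or.inr inferInstance) (n + 1) h₁ _
      exact this _)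
    exact hu.trans ((congrArg (fun t => t ≫ _) (hY u)).trans zero_comp)
  obtain ⟨v, hv⟩ := Pretriangulated.Triangle.yoneda_exact₃ _ hT f h0
  have hv0 (v : (Q.obj F)⟦(1 : ℤ)⟧ ⟶ (Q.obj T)⟦n⟧) : v = 0 := by
    rw [← cancel_epi ((Q.commShiftIso (1 : ℤ)).hom.app F), comp_zero]
    exact hom_shift_eq_zero (K := F⟦(1 : ℤ)⟧)
      (Or.inl ((CochainComplex.isKProjective_shift_iff F 1).2 inferInstance)) n h₂ _
  exact hv.trans ((congrArg (fun t => _ ≫ t) (hv0 v)).trans comp_zero)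

lemma hom_eq_zero_of_iso_shift {D : Type*} [Category* D] [Preadditive D] [HasShift D ℤ] [∀ n : ℤ, (shiftFunctor D n).Additive]
    {W W' : D} (a n : ℤ) (e : W' ≅ W⟦a⟧)
    (h : ∀ f : W ⟶ W⟦n⟧, f = 0) (f : W' ⟶ W'⟦n⟧) : f = 0 := by
  obtain ⟨u, hu⟩ := (shiftFunctor D a).map_surjective
    (e.inv ≫ f ≫ e.hom⟦n⟧' ≫ (shiftComm W a n).hom)
  rw [h u, Functor.map_zero] at hu
  rw [← cancel_epi e.inv, ← cancel_mono (e.hom⟦n⟧'), ← cancel_mono (shiftComm W a n).hom]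
  simpa using hu.symm

lemma subsingleton_ext_of_single [HasExt.{v} C] (M : C) (a : ℤ) (n : ℕ)
    (h : ∀ f : Q.obj ((single C (ComplexShape.up ℤ) a).obj M) ⟶
      (Q.obj ((single C (ComplexShape.up ℤ) a).obj M))⟦(n : ℤ)⟧, f = 0) :
    Subsingleton (Abelian.Ext M M n) := by
  let e : (singleFunctor C 0).obj M ≅
      (Q.obj ((single C (ComplexShape.up ℤ) a).obj M))⟦a⟧ :=
    ((singleFunctors C).shiftIso a 0 a (by simp)).symm.app M ≪≫
      (shiftFunctor _ a).mapIso ((singleFunctorIsoCompQ C a).app M)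
  have : Subsingleton (ShiftedHom ((singleFunctor C 0).obj M) ((singleFunctor C 0).obj M) (n : ℤ)) :=
    subsingleton_of_forall_eq 0 (hom_eq_zero_of_iso_shift a n e h)
  exact Abelian.Ext.homEquiv.injective.subsingleton

/-- Let `Y` be concentrated in degrees `[a, b]`, with projective and injective terms in degrees
`> a`. If `Hom(Y, Y⟦n⟧)` vanishes for `n` large, then so does `Ext n` of the bottom term `Y.X a`
with itself: the kernel of `Y ⟶ Y.X a` is a bounded complex of projective-injectives. -/
lemma exists_ext_vanishing [HasExt.{v} C] (Y : CochainComplex C ℤ) (a b : ℤ) (hY : ∀ n : ℤ, (n < a ∨ b < n) → IsZero (Y.X n))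
   (hproj : ∀ n > a, Projective (Y.X n)) (hinj : ∀ n > a, Injective (Y.X n))
   (N : ℤ) (hN : ∀ n ≥ N, ∀ f : Q.obj Y ⟶ (Q.obj Y)⟦n⟧, f = 0) :
   ∃ N' : ℕ, ∀ n ≥ N', Subsingleton (Abelian.Ext (Y.X a) (Y.X a) n) := by
  let T := (single C (ComplexShape.up ℤ) a).obj (Y.X a)
  let p : Y ⟶ T := mkHomToSingle (𝟙 _) (fun i hi => (hY i (by simp at hi; omega)).eq_of_src _ _)
  have hp : IsIso (p.f a) := by simp only [p, mkHomToSingle_f]; infer_instance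
  have hTz (i : ℤ) (hi : i ≠ a) : IsZero (T.X i) := isZero_single_obj_X _ _ _ _ hi
  have hpe : Epi p := epi_of_epi_f _ fun i => by
    by_cases hi : i = a
    · subst hi; infer_instance
    · exact ⟨fun _ _ _ => (hTz i hi).eq_of_src _ _⟩
  let S := ShortComplex.mk (kernel.ι p) p (kernel.condition p)
  have hS : S.ShortExact := { exact := ShortComplex.exact_kernel p }
  have hSi (i : ℤ) := hS.map_of_exact (eval C (ComplexShape.up ℤ) i)
  have hFz (i : ℤ) (hi : i ≤ a ∨ b < i) : IsZero ((kernel p).X i) := by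
    by_cases h : i = a
    · subst h
      exact (hSi i).isIso_g_iff.1 hp
    · exact IsZero.of_mono (f := (kernel.ι p).f i) (hY i (by omega))
  have e (i : ℤ) (hi : i > a) : (kernel p).X i ≅ Y.X i := by
    have : IsIso ((kernel.ι p).f i) := (hSi i).isIso_f_iff.2 (hTz i (by omega))
    exact asIso ((kernel.ι p).f i)
  have hP (i : ℤ) : Projective ((kernel p).X i) := by
    by_cases h : i > a
    · have := hproj i h
      exact Projective.of_iso (e i h).symm this
    · exact (hFz i (by omega)).projective
  have hI (i : ℤ) : Injective ((kernel p).X i) := by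
    by_cases h : i > a
    · have := hinj i h
      exact Injective.of_iso (e i h).symm this
    · exact (hFz i (by omega)).injective
  have : (kernel p).IsStrictlyLE b := by
    rw [CochainComplex.isStrictlyLE_iff]; exact fun i hi => hFz i (by omega)
  have : (kernel p).IsStrictlyGE a := by
    rw [CochainComplex.isStrictlyGE_iff]; exact fun i hi => hFz i (by omega)
  have := CochainComplex.isKProjective_of_projective (kernel p) b
  have := CochainComplex.isKInjective_of_injective (kernel p) a
  -- For `n > b - a` the support conditions on `kernel p`, `Y` and `T` hold.
  refine ⟨(max N (b - a + 1)).toNat, fun n hn => subsingleton_ext_of_single _ a n ?_⟩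
  refine hom_top_quotient_eq_zero _ hS n (fun j => ?_) (fun j => ?_) (hN n (by omega))
  · by_cases hj : j < a
    · exact Or.inl (hY j (by omega))
    · exact Or.inr (hFz _ (by omega))
  · by_cases hj : j + n = a
    · exact Or.inl (hFz _ (by omega))
    · exact Or.inr (hTz _ hj)
end

/-! ### Complexes of finitely generated modules -/

lemma exists_fg_projective_epi {A : Type} [Ring A] (M : ModuleCat.{u} A) [Module.Finite A M] :
    ∃ (P : ModuleCat.{u} A) (π : P ⟶ M), Module.Finite A P ∧ Projective P ∧ Epi π := by
  obtain ⟨n, f, hf⟩ := Module.Finite.exists_fin' A M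
  let e : (Fin n → ULift.{u} A) ≃ₗ[A] (Fin n → A) :=
    LinearEquiv.piCongrRight fun _ => ULift.moduleEquiv
  refine ⟨ModuleCat.of A (Fin n → ULift.{u} A), ModuleCat.ofHom (f ∘ₗ e.toLinearMap),
    Module.Finite.equiv e.symm, ?_, ?_⟩
  · have : Module.Projective A (Fin n → ULift.{u} A) := Module.Projective.of_equiv e.symm
    exact (IsProjective.iff_projective _).1 this
  · rw [ModuleCat.epi_iff_surjective]
    exact hf.comp e.surjective

lemma finite_of_mono {A : Type} [Ring A] [IsNoetherianRing A] {M N : ModuleCat.{u} A}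
    [Module.Finite A N] (m : M ⟶ N) [Mono m] : Module.Finite A M :=
  Module.Finite.of_injective m.hom ((ModuleCat.mono_iff_injective m).1 inferInstance)

/-- A bounded complex of finitely generated modules in degrees `[a, b]` can be replaced, up to
isomorphism in the derived category, by one of the same kind whose top `j` terms in degrees `> a`
are projective. The terms are replaced from degree `b` downwards; finite generation survives in
the neighbouring degree because `A` is Noetherian. -/
lemma exists_replace {A : Type} [Ring A] [IsNoetherianRing A]
    [HasDerivedCategory.{w} (ModuleCat.{u} A)] (X : CochainComplex (ModuleCat.{u} A) ℤ) (a b : ℤ)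
    (hX : ∀ n : ℤ, (n < a ∨ b < n) → IsZero (X.X n)) (hfg : ∀ n : ℤ, Module.Finite A (X.X n))
    (j : ℕ) :
    ∃ Y : CochainComplex (ModuleCat.{u} A) ℤ, Nonempty (Q.obj Y ≅ Q.obj X) ∧
      (∀ n : ℤ, (n < a ∨ b < n) → IsZero (Y.X n)) ∧ (∀ n : ℤ, Module.Finite A (Y.X n)) ∧
      ∀ n : ℤ, a < n → b - j < n → Projective (Y.X n) := by
  induction j with
  | zero =>
    exact ⟨X, ⟨Iso.refl _⟩, hX, hfg, fun n _ hn => (hX n (Or.inr (by simpa using hn))).projective⟩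
  | succ j ih =>
    obtain ⟨Y, ⟨e⟩, hY, hYfg, hYp⟩ := ih
    by_cases hle : b - j ≤ a
    · exact ⟨Y, ⟨e⟩, hY, hYfg, fun n h₁ _ => hYp n h₁ (by omega)⟩
    generalize hn : b - (j : ℤ) = n at *
    have := hYfg n
    obtain ⟨P, π, hPfg, hP, hπ⟩ := exists_fg_projective_epi (Y.X n)
    obtain ⟨Z, ⟨e'⟩, ⟨en⟩, ei, m, hm⟩ := exists_replace_one Y n π
    refine ⟨Z, ⟨e' ≪≫ e⟩, fun i hi => ?_, fun i => ?_, fun i h₁ h₂ => ?_⟩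
    · obtain ⟨e₁⟩ := ei i (by omega) (by omega)
      exact (hY i hi).of_iso e₁
    · by_cases h₁ : i = n
      · subst h₁
        exact Module.Finite.equiv en.symm.toLinearEquiv
      · by_cases h₂ : i = n - 1
        · subst h₂
          have := hYfg (n - 1)
          have := hYfg n
          exact finite_of_mono (m ≫ (ModuleCat.biprodIsoProd _ _).hom)
        · obtain ⟨e₁⟩ := ei i h₁ h₂
          have := hYfg i
          exact Module.Finite.equiv e₁.symm.toLinearEquiv
    · by_cases h₃ : i = n
      · subst h₃
        exact Projective.of_iso en.symm hP
      · obtain ⟨e₁⟩ := ei i h₃ (by push_cast at h₂; omega)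
        exact Projective.of_iso e₁.symm (hYp i h₁ (by push_cast at h₂; omega))

/-- Let `A` be a finite-dimensional self-injective `k`-algebra satisfying
condition (#): every finitely generated non-projective `A`-module `M` has
`Ext_A^n(M, M) ≠ 0` for infinitely many `n`.  Then every object `X` of `D^b(mod-A)`
(a bounded complex of finitely generated modules) such that `Hom_{D(A)}(X, X[n]) = 0`
for all but finitely many `n` belongs to `K^b(P_A)`, i.e. is isomorphic in the derived
category to a bounded complex of finitely generated projective `A`-modules. -/
theorem mem_perfect_of_almost_vanishing_self_homs
    (k A : Type) [Field k] [Ring A] [Algebra k A] [FiniteDimensional k A]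
    (hselfinj : Injective (ModuleCat.of A A))
    [HasDerivedCategory (ModuleCat A)]
    (hsharp : ∀ M : ModuleCat A, Module.Finite A M → ¬ Projective M →
      {n : ℕ | Nontrivial (((Ext k (ModuleCat A) n).obj (op M)).obj M)}.Infinite)
    (X : CochainComplex (ModuleCat A) ℤ)
    (hXbdd : ∃ a b : ℤ, ∀ n : ℤ, (n < a ∨ b < n) → IsZero (X.X n))
    (hXfg : ∀ n : ℤ, Module.Finite A (X.X n))
    (hhom : {n : ℤ | ∃ f : Q.obj X ⟶ (Q.obj X)⟦n⟧, f ≠ 0}.Finite) :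
    ∃ P : CochainComplex (ModuleCat A) ℤ,
      (∃ a b : ℤ, ∀ n : ℤ, (n < a ∨ b < n) → IsZero (P.X n)) ∧
      (∀ n : ℤ, Projective (P.X n)) ∧ (∀ n : ℤ, Module.Finite A (P.X n)) ∧
      Nonempty (Q.obj X ≅ Q.obj P) := by
  have : IsNoetherianRing A := IsNoetherianRing.of_finite k A
  obtain ⟨a, b, hX⟩ := hXbdd
  obtain ⟨Y, ⟨e⟩, hY, hYfg, hYp⟩ := exists_replace X a b hX hXfg (b - a).toNat
  have hYp' : ∀ n > a, Projective (Y.X n) := fun n hn => hYp n hn (by omega)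
  obtain ⟨N, hN⟩ := hhom.bddAbove
  have hvan : ∀ n ≥ N + 1, ∀ f : Q.obj Y ⟶ (Q.obj Y)⟦n⟧, f = 0 := fun n hn f => by
    by_contra hf
    have : n ≤ N := hN ⟨e.inv ≫ f ≫ e.hom⟦n⟧', fun h => hf (by
      rw [← cancel_epi e.inv, ← cancel_mono (e.hom⟦n⟧')]
      simpa using h)⟩
    omega
  obtain ⟨N', hN'⟩ := exists_ext_vanishing Y a b hY hYp' (fun n hn => by
    have := hYp' n hn
    have := hYfg n
    exact injective_of_fg_projective hselfinj _) (N + 1) hvan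
  have := hYfg a
  refine ⟨Y, ⟨a, b, hY⟩, fun n => ?_, hYfg, ⟨e.symm⟩⟩
  -- `M = Y.X a` is the only term not yet known to be projective; condition (#) settles it.
  obtain h | rfl | h := lt_trichotomy n a
  · exact (hY n (Or.inl h)).projective
  · exact projective_of_ext hsharp _ N' hN'
  · exact hYp' n h
end
end

section
/- Let A be the quotient of the path algebra of the quiver with two vertices 1, 2 and arrows α: 1→2 and β: 2→1, by the ideal generated by αβα and βαβ. Then for the simple A-module S₁ at vertex 1, Ext_A^n(S₁, S₁) is one-dimensional if n ≥ 0 and n ≡ 0 or 3 (mod 4), and zero otherwise. -/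
/-!
Write `P₁ = Ae₁` and `P₂ = Ae₂` for the indecomposable projectives. Both are uniserial of
length three, with bases `e₁, α, βα` and `e₂, β, αβ`. Hence `S₁` has the minimal projective
resolution
`⋯ → P₁ → P₁ → P₂ → P₂ → P₁ → S₁`,
periodic of period four, whose differentials `P₁ → P₁ → P₂ → P₂ → P₁` are the right
multiplications by `βα, β, αβ, α`. Exactness (`exact_r`, `exact_χ`) is read off from the normal form of elements of `A`
(`exists_normal_form`) and from `βα ≠ 0`, `αβ ≠ 0`, which are seen in the matrix
representations on `P₁` and `P₂`.

Every path occurring in a differential is killed by the character `χ`, so `Hom(-, S₁)` turns all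
differentials into zero (`dif_comp`). Therefore `Extⁿ(S₁, S₁)` is `Hom(Pⁿ, S₁)` for the `n`-th
term `Pⁿ` of the resolution (`extIso`). This is one-dimensional, spanned by `χ`, when the term is
`P₁`, that is when `n ≡ 0, 3 (mod 4)`, and zero when it is `P₂`.
-/

open CategoryTheory Opposite

noncomputable section

namespace QuiverAlgebraStmt

variable (k : Type) [Field k]

/-- Generators of the path algebra of the quiver `1 ⇄ 2`: generator `0` is the
idempotent `e = e₁` at vertex `1`, generator `1` is the arrow `α : 1 → 2`, and
generator `2` is the arrow `β : 2 → 1`.  (The idempotent at vertex `2` is `1 - e`.) -/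
abbrev gen (i : Fin 3) : FreeAlgebra k (Fin 3) := FreeAlgebra.ι k i

/-- The defining relations of `A = kQ/(αβα, βαβ)` where `Q` is the quiver
`1 ⇄ 2` with arrows `α : 1 → 2`, `β : 2 → 1`:  the path algebra relations for the
vertex idempotent `e = e₁` (writing composition right-to-left, so `α = e₂ α e₁`),
together with the ideal relations `αβα = 0` and `βαβ = 0`. -/
inductive Rel : FreeAlgebra k (Fin 3) → FreeAlgebra k (Fin 3) → Prop
  | ee : Rel (gen k 0 * gen k 0) (gen k 0)
  | ae : Rel (gen k 1 * gen k 0) (gen k 1)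
  | ea : Rel (gen k 0 * gen k 1) 0
  | eb : Rel (gen k 0 * gen k 2) (gen k 2)
  | be : Rel (gen k 2 * gen k 0) 0
  | aba : Rel (gen k 1 * gen k 2 * gen k 1) 0
  | bab : Rel (gen k 2 * gen k 1 * gen k 2) 0

/-- The algebra `A = kQ/(αβα, βαβ)`. -/
abbrev A : Type := RingQuot (Rel k)

/-- The one-dimensional representation of `A` at vertex `1`: `e ↦ 1`, `α ↦ 0`, `β ↦ 0`. -/
def χ : A k →ₐ[k] k :=
  RingQuot.liftAlgHom k
    ⟨FreeAlgebra.lift k (fun i => if i = 0 then (1 : k) else 0), by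
      rintro x y ⟨⟩ <;> simp⟩

/-- The simple `A`-module `S₁` at vertex `1`: the field `k` with `A` acting through `χ`. -/
def S₁ : ModuleCat (A k) :=
  @ModuleCat.of (A k) _ k _ (Module.compHom k (χ k).toRingHom)

/-! ### The algebra -/

/-- The idempotent `e₁` in `A`. -/
def e : A k := RingQuot.mkAlgHom k (Rel k) (gen k 0)

/-- The class of the arrow `α` in `A`. -/
def α : A k := RingQuot.mkAlgHom k (Rel k) (gen k 1)

/-- The class of the arrow `β` in `A`. -/
def β : A k := RingQuot.mkAlgHom k (Rel k) (gen k 2)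

lemma ee : e k * e k = e k := by
  simpa [e] using RingQuot.mkAlgHom_rel k (Rel.ee (k := k))

lemma ae : α k * e k = α k := by
  simpa [e, α] using RingQuot.mkAlgHom_rel k (Rel.ae (k := k))

lemma ea : e k * α k = 0 := by
  simpa [e, α] using RingQuot.mkAlgHom_rel k (Rel.ea (k := k))

lemma eb : e k * β k = β k := by
  simpa [e, β] using RingQuot.mkAlgHom_rel k (Rel.eb (k := k))

lemma be : β k * e k = 0 := by
  simpa [e, β] using RingQuot.mkAlgHom_rel k (Rel.be (k := k))

lemma aba : α k * (β k * α k) = 0 := by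
  simpa [α, β, mul_assoc] using RingQuot.mkAlgHom_rel k (Rel.aba (k := k))

lemma bab : β k * (α k * β k) = 0 := by
  simpa [α, β, mul_assoc] using RingQuot.mkAlgHom_rel k (Rel.bab (k := k))

lemma aa : α k * α k = 0 := by
  rw [← ae k, mul_assoc, ← mul_assoc (e k), ea, zero_mul, mul_zero]

lemma bb : β k * β k = 0 := by
  rw [← eb k, mul_assoc, ← mul_assoc (β k), be, zero_mul, mul_zero]

/-- The relations followed by an arbitrary right factor `x`. Together with the relations
themselves they reduce every right-associated word to one of the six basis paths or to zero. -/
lemma rel_assoc (x : A k) :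
    e k * (e k * x) = e k * x ∧ α k * (e k * x) = α k * x ∧ e k * (α k * x) = 0 ∧
    e k * (β k * x) = β k * x ∧ β k * (e k * x) = 0 ∧ α k * (α k * x) = 0 ∧
    β k * (β k * x) = 0 ∧ α k * (β k * (α k * x)) = 0 ∧ β k * (α k * (β k * x)) = 0 := by
  have haba : α k * (β k * (α k * x)) = α k * (β k * α k) * x := by simp only [mul_assoc]
  have hbab : β k * (α k * (β k * x)) = β k * (α k * β k) * x := by simp only [mul_assoc]
  refine ⟨?_, ?_, ?_, ?_, ?_, ?_, ?_, ?_, ?_⟩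
  · rw [← mul_assoc, ee]
  · rw [← mul_assoc, ae]
  · rw [← mul_assoc, ea, zero_mul]
  · rw [← mul_assoc, eb]
  · rw [← mul_assoc, be, zero_mul]
  · rw [← mul_assoc, aa, zero_mul]
  · rw [← mul_assoc, bb, zero_mul]
  · rw [haba, aba, zero_mul]
  · rw [hbab, bab, zero_mul]

lemma χ_e : χ k (e k) = 1 := by
  rw [χ, e, RingQuot.liftAlgHom_mkAlgHom_apply]; simp

lemma χ_α : χ k (α k) = 0 := by
  rw [χ, α, RingQuot.liftAlgHom_mkAlgHom_apply]; simp

lemma χ_β : χ k (β k) = 0 := by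
  rw [χ, β, RingQuot.liftAlgHom_mkAlgHom_apply]; simp

/-- `A` is spanned by the six paths `e₁, e₂, α, β, βα, αβ`. -/
lemma exists_normal_form (a : A k) : ∃ c₁ c₂ c₃ c₄ c₅ c₆ : k,
    a = c₁ • e k + c₂ • (1 - e k) + c₃ • α k + c₄ • β k + c₅ • (β k * α k)
      + c₆ • (α k * β k) := by
  obtain ⟨x, rfl⟩ := RingQuot.mkAlgHom_surjective k (Rel k) a
  induction x using FreeAlgebra.induction with
  | grade0 r =>
    refine ⟨r, r, 0, 0, 0, 0, ?_⟩
    rw [AlgHom.commutes, Algebra.algebraMap_eq_smul_one]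
    module
  | grade1 i =>
    fin_cases i
    · exact ⟨1, 0, 0, 0, 0, 0, by change e k = _; module⟩
    · exact ⟨0, 0, 1, 0, 0, 0, by change α k = _; module⟩
    · exact ⟨0, 0, 0, 1, 0, 0, by change β k = _; module⟩
  | mul x y hx hy =>
    obtain ⟨a₁, a₂, a₃, a₄, a₅, a₆, hx⟩ := hx
    obtain ⟨b₁, b₂, b₃, b₄, b₅, b₆, hy⟩ := hy
    refine ⟨a₁ * b₁, a₂ * b₂, a₃ * b₁ + a₂ * b₃, a₄ * b₂ + a₁ * b₄,
      a₁ * b₅ + a₄ * b₃ + a₅ * b₁, a₂ * b₆ + a₃ * b₄ + a₆ * b₂, ?_⟩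
    rw [map_mul, hx, hy]
    simp only [mul_add, add_mul, mul_sub, sub_mul, smul_mul_smul_comm, mul_assoc, mul_one, one_mul,
      ee, ae, ea, eb, be, aa, bb, aba, bab, rel_assoc, mul_zero, smul_zero]
    module
  | add x y hx hy =>
    obtain ⟨a₁, a₂, a₃, a₄, a₅, a₆, hx⟩ := hx
    obtain ⟨b₁, b₂, b₃, b₄, b₅, b₆, hy⟩ := hy
    refine ⟨a₁ + b₁, a₂ + b₂, a₃ + b₃, a₄ + b₄, a₅ + b₅, a₆ + b₆, ?_⟩
    rw [map_add, hx, hy]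
    module

/-- The path `βα` is nonzero: it acts nontrivially on `P₁ = Ae₁` in the basis `e₁, α, βα`. -/
lemma ba_ne_zero : β k * α k ≠ 0 := by
  let ρ : A k →ₐ[k] Matrix (Fin 3) (Fin 3) k := RingQuot.liftAlgHom k
    ⟨FreeAlgebra.lift k ![!![1, 0, 0; 0, 0, 0; 0, 0, 1], !![0, 0, 0; 1, 0, 0; 0, 0, 0],
      !![0, 0, 0; 0, 0, 0; 0, 1, 0]], by
      rintro x y ⟨⟩ <;> ext i j <;> fin_cases i <;> fin_cases j <;>
        simp [Matrix.mul_apply, Fin.sum_univ_three]⟩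
  intro h
  have h' : ρ (β k * α k) 2 0 = 0 := by rw [h]; simp
  rw [map_mul, α, β, RingQuot.liftAlgHom_mkAlgHom_apply,
    RingQuot.liftAlgHom_mkAlgHom_apply] at h'
  simp [Matrix.mul_apply, Fin.sum_univ_three] at h'

/-- The path `αβ` is nonzero: it acts nontrivially on `P₂ = Ae₂` in the basis `e₂, β, αβ`. -/
lemma ab_ne_zero : α k * β k ≠ 0 := by
  let ρ : A k →ₐ[k] Matrix (Fin 3) (Fin 3) k := RingQuot.liftAlgHom k
    ⟨FreeAlgebra.lift k ![!![0, 0, 0; 0, 1, 0; 0, 0, 0], !![0, 0, 0; 0, 0, 0; 0, 1, 0],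
      !![0, 0, 0; 1, 0, 0; 0, 0, 0]], by
      rintro x y ⟨⟩ <;> ext i j <;> fin_cases i <;> fin_cases j <;>
        simp [Matrix.mul_apply, Fin.sum_univ_three]⟩
  intro h
  have h' : ρ (α k * β k) 2 0 = 0 := by rw [h]; simp
  rw [map_mul, α, β, RingQuot.liftAlgHom_mkAlgHom_apply,
    RingQuot.liftAlgHom_mkAlgHom_apply] at h'
  simp [Matrix.mul_apply, Fin.sum_univ_three] at h'

lemma normal_form_e {x : A k} (hx : x * e k = x) : ∃ c₁ c₂ c₃ : k,
    x = c₁ • e k + c₂ • α k + c₃ • (β k * α k) := by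
  obtain ⟨c₁, c₂, c₃, c₄, c₅, c₆, h⟩ := exists_normal_form k x
  refine ⟨c₁, c₃, c₅, ?_⟩
  rw [← hx, h]
  simp only [add_mul, sub_mul, smul_mul_assoc, mul_assoc, one_mul, ee, ae, be, mul_zero]
  module

lemma normal_form_e' {x : A k} (hx : x * (1 - e k) = x) : ∃ c₁ c₂ c₃ : k,
    x = c₁ • (1 - e k) + c₂ • β k + c₃ • (α k * β k) := by
  obtain ⟨c₁, c₂, c₃, c₄, c₅, c₆, h⟩ := exists_normal_form k x
  refine ⟨c₂, c₄, c₆, ?_⟩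
  rw [← hx, h]
  simp only [add_mul, sub_mul, mul_sub, smul_mul_assoc, mul_assoc, one_mul, mul_one, ee, ae, be,
    mul_zero]
  module

/-! ### Exactness of the periodic sequence of right multiplications -/

/-- The idempotent `ε n` for which the `n`-th term of the minimal resolution of `S₁` is
`A (ε n)`. The terms are `P₁, P₂, P₂, P₁`, repeated with period four. -/
def ε (n : ℕ) : A k := if n % 4 = 0 ∨ n % 4 = 3 then e k else 1 - e k

/-- The element by which the differential `A (ε (n + 1)) → A (ε n)` multiplies on the right:
`α, αβ, β, βα`, repeated with period four. -/
def r (n : ℕ) : A k :=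
  if n % 4 = 0 then α k else if n % 4 = 1 then α k * β k else if n % 4 = 2 then β k
  else β k * α k

/-- Evaluates `ε` and `r` at consecutive arguments, according to the residue of the first. -/
lemma ε_r_cases (n : ℕ) :
    (ε k n = e k ∧ ε k (n + 1) = 1 - e k ∧ ε k (n + 2) = 1 - e k ∧
      r k n = α k ∧ r k (n + 1) = α k * β k) ∨
    (ε k n = 1 - e k ∧ ε k (n + 1) = 1 - e k ∧ ε k (n + 2) = e k ∧
      r k n = α k * β k ∧ r k (n + 1) = β k) ∨
    (ε k n = 1 - e k ∧ ε k (n + 1) = e k ∧ ε k (n + 2) = e k ∧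
      r k n = β k ∧ r k (n + 1) = β k * α k) ∨
    (ε k n = e k ∧ ε k (n + 1) = e k ∧ ε k (n + 2) = 1 - e k ∧
      r k n = β k * α k ∧ r k (n + 1) = α k) := by
  have h : n % 4 = 0 ∨ n % 4 = 1 ∨ n % 4 = 2 ∨ n % 4 = 3 := by omega
  rcases h with h | h | h | h
  · left; simp [ε, r, Nat.add_mod, h]
  · right; left; simp [ε, r, Nat.add_mod, h]
  · right; right; left; simp [ε, r, Nat.add_mod, h]
  · right; right; right; simp [ε, r, Nat.add_mod, h]

lemma ε_idem (n : ℕ) : ε k n * ε k n = ε k n := by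
  unfold ε
  split_ifs
  · exact ee k
  · simp [mul_sub, sub_mul, ee]

lemma r_mul_ε (n : ℕ) : r k n * ε k n = r k n := by
  rcases ε_r_cases k n with ⟨h, -, -, h', -⟩ | ⟨h, -, -, h', -⟩ | ⟨h, -, -, h', -⟩ |
    ⟨h, -, -, h', -⟩ <;> simp [h, h', mul_sub, mul_assoc, ae, be]

lemma r_mul_r (n : ℕ) : r k (n + 1) * r k n = 0 := by
  rcases ε_r_cases k n with ⟨-, -, -, h, h'⟩ | ⟨-, -, -, h, h'⟩ | ⟨-, -, -, h, h'⟩ |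
    ⟨-, -, -, h, h'⟩ <;> simp [h, h', mul_assoc, aba, bab]

lemma χ_r (n : ℕ) : χ k (r k n) = 0 := by
  rcases ε_r_cases k n with ⟨-, -, -, h, -⟩ | ⟨-, -, -, h, -⟩ | ⟨-, -, -, h, -⟩ |
    ⟨-, -, -, h, -⟩ <;> simp [h, χ_α, χ_β]

/-- A criterion for `u` and `v` to be linearly independent: left multiplication by `z` kills `v`
but not `u`. -/
lemma coeff_eq_zero {c d : k} {u v z : A k} (h : c • u + d • v = 0) (hzu : z * u ≠ 0)
    (hzv : z * v = 0) (hv : v ≠ 0) : c = 0 ∧ d = 0 := by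
  have h1 : c • (z * u) = 0 := by
    have := congrArg (z * ·) h
    simpa [mul_add, hzv] using this
  have hc : c = 0 := (smul_eq_zero.1 h1).resolve_right hzu
  subst hc
  exact ⟨rfl, (smul_eq_zero.1 (by simpa using h)).resolve_right hv⟩

/-- Exactness of the resolution in positive degrees. -/
lemma exact_r (n : ℕ) {x : A k} (hx : x * ε k (n + 1) = x) (h : x * r k n = 0) :
    ∃ y : A k, y * ε k (n + 2) = y ∧ y * r k (n + 1) = x := by
  rcases ε_r_cases k n with ⟨-, h1, h2, h3, h4⟩ | ⟨-, h1, h2, h3, h4⟩ | ⟨-, h1, h2, h3, h4⟩ |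
    ⟨-, h1, h2, h3, h4⟩ <;> rw [h1] at hx <;> rw [h3] at h <;> rw [h2, h4]
  · obtain ⟨c₁, c₂, c₃, rfl⟩ := normal_form_e' k hx
    have h' : c₁ • α k + c₂ • (β k * α k) = 0 := by
      simpa [add_mul, sub_mul, mul_assoc, ea, aba] using h
    obtain ⟨rfl, rfl⟩ := coeff_eq_zero k h' (ba_ne_zero k) (by simp [rel_assoc]) (ba_ne_zero k)
    exact ⟨c₃ • (1 - e k), by simp [mul_sub, sub_mul, ee],
      by simp [sub_mul, rel_assoc]⟩
  · obtain ⟨c₁, c₂, c₃, rfl⟩ := normal_form_e' k hx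
    have h' : c₁ • (α k * β k) = 0 := by
      simpa [add_mul, sub_mul, mul_assoc, rel_assoc, bab] using h
    obtain rfl := (smul_eq_zero.1 h').resolve_right (ab_ne_zero k)
    exact ⟨c₂ • e k + c₃ • α k, by simp [add_mul, ee, ae], by simp [add_mul, eb]⟩
  · obtain ⟨c₁, c₂, c₃, rfl⟩ := normal_form_e k hx
    have h' : c₁ • β k + c₂ • (α k * β k) = 0 := by
      simpa [add_mul, mul_assoc, eb, bab] using h
    obtain ⟨rfl, rfl⟩ := coeff_eq_zero k h' (ab_ne_zero k) (by simp [rel_assoc]) (ab_ne_zero k)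
    exact ⟨c₃ • e k, by simp [ee], by simp [rel_assoc]⟩
  · obtain ⟨c₁, c₂, c₃, rfl⟩ := normal_form_e k hx
    have h' : c₁ • (β k * α k) = 0 := by
      simpa [add_mul, mul_assoc, rel_assoc, aba] using h
    obtain rfl := (smul_eq_zero.1 h').resolve_right (ba_ne_zero k)
    exact ⟨c₂ • (1 - e k) + c₃ • β k, by simp [add_mul, sub_mul, mul_sub, ee, be],
      by simp [add_mul, sub_mul, ea]⟩

/-- Exactness of the resolution in degree zero: the kernel of the augmentation on `P₁` is its
radical `Aα`. -/
lemma exact_χ {x : A k} (hx : x * ε k 0 = x) (h : χ k x = 0) :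
    ∃ y : A k, y * ε k 1 = y ∧ y * r k 0 = x := by
  have h0 : ε k 0 = e k := by simp [ε]
  have h1 : ε k 1 = 1 - e k := by simp [ε]
  have h2 : r k 0 = α k := by simp [r]
  rw [h0] at hx
  rw [h1, h2]
  obtain ⟨c₁, c₂, c₃, rfl⟩ := normal_form_e k hx
  have h' : c₁ = 0 := by simpa [χ_e, χ_α, χ_β] using h
  subst h'
  exact ⟨c₂ • (1 - e k) + c₃ • β k, by simp [add_mul, sub_mul, mul_sub, ee, be],
    by simp [add_mul, sub_mul, ea]⟩

/-! ### The minimal projective resolution -/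

/-- The left ideal `A (ε n)`, described as the elements fixed by right multiplication by the
idempotent `ε n`. -/
def proj (n : ℕ) : Submodule (A k) (A k) where
  carrier := {x | x * ε k n = x}
  add_mem' {a b} ha hb := by
    change (a + b) * ε k n = a + b
    rw [add_mul, show a * ε k n = a from ha, show b * ε k n = b from hb]
  zero_mem' := zero_mul _
  smul_mem' c x hx := by
    change c * x * ε k n = c * x
    rw [mul_assoc, show x * ε k n = x from hx]

lemma mem_proj {n : ℕ} {x : A k} : x ∈ proj k n ↔ x * ε k n = x := Iff.rfl

/-- The idempotent `ε n` as a generator of `A (ε n)`. -/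
def genProj (n : ℕ) : proj k n := ⟨ε k n, ε_idem k n⟩

lemma smul_genProj {n : ℕ} (x : proj k n) : (x : A k) • genProj k n = x :=
  Subtype.ext x.2

instance (n : ℕ) : Module.Projective (A k) (proj k n) :=
  Module.Projective.of_split (proj k n).subtype
    (LinearMap.toSpanSingleton (A k) (proj k n) (genProj k n))
    (LinearMap.ext fun x => smul_genProj k x)

/-- The differential `A (ε (n + 1)) → A (ε n)`, right multiplication by `r n`. -/
def dif (n : ℕ) : proj k (n + 1) →ₗ[A k] proj k n where
  toFun x := ⟨x * r k n, by rw [mem_proj, mul_assoc, r_mul_ε]⟩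
  map_add' x y := Subtype.ext (add_mul _ _ _)
  map_smul' c x := Subtype.ext (mul_assoc _ _ _)

/-- The minimal projective resolution of `S₁` as a chain complex. -/
def cplx : ChainComplex (ModuleCat (A k)) ℕ :=
  ChainComplex.of (fun n => ModuleCat.of (A k) (proj k n)) (fun n => ModuleCat.ofHom (dif k n))
    (fun n => by
      ext x
      change (x : A k) * r k (n + 1) * r k n = 0
      rw [mul_assoc, r_mul_r, mul_zero])

lemma cplx_d (n : ℕ) : (cplx k).d (n + 1) n = ModuleCat.ofHom (dif k n) := by
  exact ChainComplex.of_d (fun n => ModuleCat.of (A k) (proj k n))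
    (fun n => ModuleCat.ofHom (dif k n)) n

lemma S₁_smul_eq_zero {a : A k} (ha : χ k a = 0) (s : S₁ k) : a • s = 0 := by
  let t : k := s
  change χ k a * t = 0
  rw [ha, zero_mul]

/-- The linear map `A (ε n) → S₁` given by restricting the character `χ`. -/
def aug (n : ℕ) : ModuleCat.of (A k) (proj k n) ⟶ S₁ k :=
  ModuleCat.ofHom (Y := S₁ k)
    { toFun := fun x => (χ k (x : A k) : k)
      map_add' := fun _ _ => map_add (χ k) _ _
      map_smul' := fun _ _ => map_mul (χ k) _ _ }

/-- A map `A (ε n) → S₁` is determined by the image of the generator. -/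
lemma hom_apply {n : ℕ} (f : ModuleCat.of (A k) (proj k n) ⟶ S₁ k) (x : proj k n) :
    f x = (x : A k) • f (genProj k n) := by
  conv_lhs => rw [← smul_genProj k x]
  exact map_smul f.hom _ _

/-- The resolution is minimal: applying `Hom(-, S₁)` kills its differentials. -/
lemma dif_comp (n : ℕ) (f : ModuleCat.of (A k) (proj k n) ⟶ S₁ k) :
    (ModuleCat.ofHom (dif k n) : ModuleCat.of (A k) (proj k (n + 1)) ⟶ _) ≫ f = 0 := by
  ext x
  have hx : χ k (dif k n x : A k) = 0 := by
    change χ k ((x : A k) * r k n) = 0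
    rw [map_mul, χ_r, mul_zero]
  exact (hom_apply k f (dif k n x)).trans (S₁_smul_eq_zero k hx _)

/-- The augmentation `P₁ → S₁` from the degree zero term of the resolution. -/
def aug₀ : (cplx k).X 0 ⟶ S₁ k := aug k 0

lemma aug₀_epi : Epi (aug₀ k) := by
  rw [ModuleCat.epi_iff_surjective]
  intro s
  let t : k := s
  refine ⟨algebraMap k (A k) t • genProj k 0, ?_⟩
  change χ k (algebraMap k (A k) t * ε k 0) = t
  rw [map_mul, AlgHom.commutes]
  simp [ε, χ_e]

lemma cplx_exactAt_succ (n : ℕ) : (cplx k).ExactAt (n + 1) := by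
  rw [HomologicalComplex.exactAt_iff' _ (n + 2) (n + 1) n (by simp) (by simp),
    ShortComplex.moduleCat_exact_iff]
  intro x hx
  change (cplx k).d (n + 1) n x = 0 at hx
  rw [cplx_d] at hx
  obtain ⟨y, hy, hyx⟩ := exact_r k n (x := (show proj k (n + 1) from x).1)
    (show proj k (n + 1) from x).2 (congrArg Subtype.val hx)
  refine ⟨(⟨y, hy⟩ : proj k (n + 2)), ?_⟩
  change (cplx k).d (n + 2) (n + 1) (⟨y, hy⟩ : proj k (n + 2)) = x
  rw [cplx_d]
  exact Subtype.ext hyx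

lemma cplx_d_aug₀ : (cplx k).d 1 0 ≫ aug₀ k = 0 := by
  rw [cplx_d]
  exact dif_comp k 0 (aug k 0)

lemma aug₀_exact : (ShortComplex.mk ((cplx k).d 1 0) (aug₀ k) (cplx_d_aug₀ k)).Exact := by
  rw [ShortComplex.moduleCat_exact_iff]
  intro x hx
  obtain ⟨y, hy, hyx⟩ := exact_χ k (x := (show proj k 0 from x).1) (show proj k 0 from x).2 hx
  refine ⟨(⟨y, hy⟩ : proj k 1), ?_⟩
  change (cplx k).d 1 0 (⟨y, hy⟩ : proj k 1) = x
  rw [cplx_d]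
  exact Subtype.ext hyx

/-- The augmentation as a chain map to `S₁` concentrated in degree zero. -/
def augHom : cplx k ⟶ (ChainComplex.single₀ (ModuleCat (A k))).obj (S₁ k) :=
  HomologicalComplex.mkHomToSingle (aug₀ k) (fun i hi => by
    obtain rfl : i = 1 := by simpa using hi.symm
    exact cplx_d_aug₀ k)

lemma augHom_quasiIso : QuasiIso (augHom k) := ⟨fun n => by
  cases n with
  | zero =>
    rw [ChainComplex.quasiIsoAt₀_iff, ShortComplex.quasiIso_iff_of_zeros' _ rfl rfl rfl]
    refine (ShortComplex.exact_and_epi_g_iff_of_iso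
      (S₂ := ShortComplex.mk ((cplx k).d 1 0) (aug₀ k) (cplx_d_aug₀ k))
      (ShortComplex.isoMk (Iso.refl _) (Iso.refl _)
        (HomologicalComplex.singleObjXSelf (ComplexShape.down ℕ) 0 (S₁ k)) ?_ ?_)).2
      ⟨aug₀_exact k, aug₀_epi k⟩
    · exact (Category.id_comp _).trans (Category.comp_id _).symm
    · refine (Category.id_comp _).trans ?_
      change aug₀ k = (augHom k).f 0 ≫ _
      rw [augHom, HomologicalComplex.mkHomToSingle_f, Category.assoc, Iso.inv_hom_id,
        Category.comp_id]
  | succ n =>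
    rw [quasiIsoAt_iff_exactAt']
    · exact cplx_exactAt_succ k n
    · exact ChainComplex.exactAt_succ_single_obj _ _⟩

/-- The complex `cplx`, augmented by `χ`, is a projective resolution of `S₁`. -/
def res : ProjectiveResolution (S₁ k) where
  complex := cplx k
  projective n := inferInstanceAs (Projective (ModuleCat.of (A k) (proj k n)))
  π := augHom k
  quasiIso := augHom_quasiIso k

/-! ### Computation of Ext -/

lemma linearYonedaObj_d (i j : ℕ) : ((cplx k).linearYonedaObj k (S₁ k)).d i j = 0 := by
  by_cases hij : i + 1 = j
  · subst hij
    ext (f : (cplx k).X i ⟶ S₁ k)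
    change (cplx k).d (i + 1) i ≫ f = 0
    rw [cplx_d]
    exact dif_comp k i f
  · exact HomologicalComplex.shape _ _ _ hij

/-- Since the resolution is minimal, `Extⁿ(S₁, S₁)` is `Hom(A (ε n), S₁)`. -/
def extIso (n : ℕ) : ((Ext k (ModuleCat (A k)) n).obj (op (S₁ k))).obj (S₁ k) ≅
    ModuleCat.of k (ModuleCat.of (A k) (proj k n) ⟶ S₁ k) :=
  (res k).isoExt n (S₁ k) ≪≫
    (ShortComplex.HomologyData.ofZeros (((cplx k).linearYonedaObj k (S₁ k)).sc n)
      (linearYonedaObj_d k _ _) (linearYonedaObj_d k _ _)).left.homologyIso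

/-- For `A = kQ/(αβα, βαβ)` (with `Q : 1 ⇄ 2`) and the simple module
`S₁` at vertex `1`, the self-extension space `Ext_A^n(S₁, S₁)` is one-dimensional when
`n ≥ 0` satisfies `n ≡ 0` or `3 (mod 4)`, and zero otherwise. -/
theorem ext_simple_module_quiver_algebra (n : ℕ) :
    ((n % 4 = 0 ∨ n % 4 = 3) →
      Module.finrank k (((Ext k (ModuleCat (A k)) n).obj (op (S₁ k))).obj (S₁ k)) = 1) ∧
    (¬ (n % 4 = 0 ∨ n % 4 = 3) →
      Subsingleton (((Ext k (ModuleCat (A k)) n).obj (op (S₁ k))).obj (S₁ k))) := by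
  have eqv := (extIso k n).toLinearEquiv
  constructor
  · intro hn
    rw [eqv.finrank_eq]
    have hε : ε k n = e k := if_pos hn
    refine finrank_eq_one (aug k n) (fun h => ?_)
      (fun (f : ModuleCat.of (A k) (proj k n) ⟶ S₁ k) => ⟨f (genProj k n), ?_⟩)
    · have h1 : aug k n (genProj k n) = 0 := by rw [h]; rfl
      change χ k (ε k n) = (0 : k) at h1
      rw [hε, χ_e] at h1
      exact one_ne_zero h1
    · refine ModuleCat.hom_ext (LinearMap.ext fun x => ?_)
      refine Eq.trans ?_ (hom_apply k f x).symm
      let c : k := f (genProj k n)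
      change χ k (algebraMap k (A k) c) * χ k (x : A k) = χ k (x : A k) * c
      rw [AlgHom.commutes]
      exact mul_comm _ _
  · intro hn
    have hε : ε k n = 1 - e k := if_neg hn
    refine (eqv.toEquiv.subsingleton_congr).2
      ⟨fun (f g : ModuleCat.of (A k) (proj k n) ⟶ S₁ k) => ?_⟩
    refine ModuleCat.hom_ext (LinearMap.ext fun (x : proj k n) => ?_)
    have hx : χ k (x : A k) = 0 := by
      rw [← show (x : A k) * ε k n = x from x.2, hε]
      simp [χ_e]
    exact ((hom_apply k f x).trans (S₁_smul_eq_zero k hx _)).trans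
      ((hom_apply k g x).trans (S₁_smul_eq_zero k hx _)).symm

end QuiverAlgebraStmt
end
end
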